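/- Strict Rényi entropy inequalities imply asymptotic multi-copy majorization: if p and q are probability vectors of dimension D with H_α(p) < H_α(q) for all α ≥ 0 (including the limiting cases α = 0, 1, ∞), then there exists k₀ such that for all k ≥ k₀, p^{⊗k} majorizes q^{⊗k}. -/

import Mathlib

/-!
For vectors of equal total mass and equal length, `x` majorizes `y` as soon as
`∑ min(x_i, t) ≤ ∑ min(y_i, t)` for every `t > 0` (`majorizes_of_sum_min_le`), equivalently
`∑ (x_i - t)₊ ≥ ∑ (y_i - t)₊`. For the tensor powers this is tested at `t = e^{-kσ}` and becomes a
comparison of large deviation rates, uniformly in `σ`.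

Discarding zero entries, write `p_i = e^{-u_i}`, `q_j = e^{-v_j}`, `Z_u(α) = ∑ e^{-α u_i}`, and let
`s_u(α) = -(log Z_u)'(α)` be the mean of `u` under the weights proportional to `e^{-α u_i}`;
so `Z_u(α) = ∑ p_i ^ α`, and `s_u(1)` is the Shannon entropy. The hypotheses say `Z_u < Z_v` on
`[0, 1)`, `Z_u > Z_v` on `(1, ∞)`, `s_u(1) < s_v(1)` and `min u < min v`.

* For `σ ≤ min v` and `σ ≥ max v` the comparison holds for every `k`
  (`truncLE_of_small`, `truncLE_of_large`).
* For `min u < σ < s_v(1)` the sums `∑ (· - t)₊` are compared. The one for `q` is at most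
  `exp k (log Z_v(β) + (β-1)σ)` for each `β ≥ 1` (Chernoff, `excess_le`). The one for `p` is at
  least `exp k (log Z_u(α) + (α-1)s_u(α) - o(1))` whenever `s_u(α) < σ` (`le_excess`), since under
  the weights tilted by `α` the sum `∑ u(x_j)` concentrates around `k s_u(α)` (`window`).
  Taking for `α` the minimizer over `[1, ∞)` of `log Z_u(α) + (α-1)σ₁` with `σ₁` just below `σ`
  gives the strict gap between the two rates (`gap_upper`).
* For `σ > s_u(1)` the sums `∑ min(·, t)` are compared in the same way, with exponents in `[0, 1]`
  (`trunc_le`, `le_trunc`, `gap_lower`).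

The strict gaps persist for nearby `σ`, and compactness of `[min v, max v]` makes the threshold
on `k` uniform (`eventually_truncLE`).
-/

open Finset

/-- A probability vector on a finite index set. -/
def IsProbVec {ι : Type*} [Fintype ι] (x : ι → ℝ) : Prop :=
  (∀ i, 0 ≤ x i) ∧ ∑ i, x i = 1

/-- `x` majorizes `y`: the total sums agree and, for every `k`, the sum of the `k`
largest entries of `x` is at least the sum of the `k` largest entries of `y`
(expressed via subsets). -/
def Majorizes {ι κ : Type*} [Fintype ι] [Fintype κ] (x : ι → ℝ) (y : κ → ℝ) : Prop :=
  (∑ i, x i = ∑ j, y j) ∧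
    ∀ s : Finset κ, ∃ t : Finset ι, t.card = s.card ∧ ∑ j ∈ s, y j ≤ ∑ i ∈ t, x i

/-- Tensor (Kronecker) product of vectors. -/
noncomputable def tens {ι κ : Type*} (x : ι → ℝ) (y : κ → ℝ) : ι × κ → ℝ :=
  fun p => x p.1 * y p.2

/-- `k`-fold tensor power of a vector. -/
noncomputable def tpow {ι : Type*} (x : ι → ℝ) (k : ℕ) : (Fin k → ι) → ℝ :=
  fun f => ∏ j, x (f j)

/-- The Duan state `z_k^D(p,q) = (1/k) ⊕_{i=1}^{k} p^{⊗(k-i)} ⊗ q^{⊗(i-1)}`;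
block `i : Fin k` is `(1/k) · p^{⊗(k-1-i)} ⊗ q^{⊗ i}`. -/
noncomputable def duan {d : ℕ} (k : ℕ) (p q : Fin d → ℝ) :
    Fin k × (Fin (k - 1) → Fin d) → ℝ :=
  fun x => (1 / (k : ℝ)) *
    ∏ j : Fin (k - 1), if (j : ℕ) < k - 1 - (x.1 : ℕ) then p (x.2 j) else q (x.2 j)

/-- Rényi entropy of order `α` (for `α > 0`, `α ≠ 1`):
`H_α(x) = (1/(1−α)) log Σ_i x_i^α`. -/
noncomputable def renyiH {ι : Type*} [Fintype ι] (α : ℝ) (x : ι → ℝ) : ℝ :=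
  (1 / (1 - α)) * Real.log (∑ i, x i ^ α)

/-- Shannon entropy `H₁(x) = −Σ x_i log x_i` (with `0 log 0 = 0`). -/
noncomputable def shannonH {ι : Type*} [Fintype ι] (x : ι → ℝ) : ℝ :=
  -∑ i, x i * Real.log (x i)

-- `H₀(x) = log |supp(x)|`.
open Classical in
noncomputable def renyiH0 {ι : Type*} [Fintype ι] (x : ι → ℝ) : ℝ :=
  Real.log ((Finset.univ.filter (fun i => x i ≠ 0)).card : ℝ)

/-- `H_∞(x) = −log max_i x_i`. -/
noncomputable def renyiHinf {ι : Type*} [Fintype ι] [Nonempty ι] (x : ι → ℝ) : ℝ :=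
  -Real.log (Finset.univ.sup' Finset.univ_nonempty x)

/-! ### Partition function and tilted mean -/

open Real Filter Topology

/-- The partition function `Z_u(α) = ∑ e^{-α u_i}`. For `u = -log p` it equals `∑ p_i ^ α`, and
at `α = 0` it counts the indices. -/
noncomputable def partFn {ι : Type*} [Fintype ι] (u : ι → ℝ) (α : ℝ) : ℝ :=
  ∑ i, exp (-(α * u i))

/-- The mean of `u` under the tilted distribution with weights `e^{-α u_i} / Z_u(α)`; it is minus
the logarithmic derivative of the partition function at `α`. -/
noncomputable def tiltMean {ι : Type*} [Fintype ι] (u : ι → ℝ) (α : ℝ) : ℝ :=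
  (∑ i, u i * exp (-(α * u i))) / partFn u α

section
variable {ι κ : Type*} [Fintype ι] [Fintype κ]

lemma partFn_pos [Nonempty ι] (u : ι → ℝ) (α : ℝ) : 0 < partFn u α :=
  Finset.sum_pos (fun _ _ => exp_pos _) Finset.univ_nonempty

lemma hasDerivAt_partFn [Nonempty ι] (u : ι → ℝ) (α : ℝ) :
    HasDerivAt (partFn u) (-(tiltMean u α * partFn u α)) α := by
  have h : HasDerivAt (partFn u) (∑ i, exp (-(α * u i)) * (-(1 * u i))) α := by
    unfold partFn
    apply HasDerivAt.fun_sum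
    intro i _
    exact (((hasDerivAt_id α).mul_const (u i)).neg).exp
  convert h using 1
  rw [tiltMean, div_mul_cancel₀ _ (partFn_pos u α).ne', ← Finset.sum_neg_distrib]
  exact Finset.sum_congr rfl fun i _ => by ring

lemma hasDerivAt_log_partFn [Nonempty ι] (u : ι → ℝ) (α : ℝ) :
    HasDerivAt (fun a => log (partFn u a)) (-tiltMean u α) α := by
  convert (hasDerivAt_partFn u α).log (partFn_pos u α).ne' using 1
  rw [← neg_mul, mul_div_cancel_right₀ _ (partFn_pos u α).ne']

/-- The partition function is multiplicative under tensor powers. -/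
lemma sum_exp_pi (u : ι → ℝ) (α : ℝ) (k : ℕ) :
    ∑ x : Fin k → ι, exp (-(α * ∑ j, u (x j))) = partFn u α ^ k := by
  rw [partFn, Fintype.sum_pow]
  refine Finset.sum_congr rfl fun x _ => ?_
  rw [← Real.exp_sum, Finset.mul_sum, Finset.sum_neg_distrib]

lemma pow_partFn [Nonempty ι] (u : ι → ℝ) (α : ℝ) (k : ℕ) :
    partFn u α ^ k = exp (k * log (partFn u α)) := by
  rw [mul_comm, Real.exp_mul, exp_log (partFn_pos u α), Real.rpow_natCast]

/-- A function with negative derivative takes a smaller value somewhere just to the right. -/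
lemma exists_right_lt {g : ℝ → ℝ} {g' a b : ℝ} (hg : HasDerivAt g g' a) (h : g' < 0)
    (hab : a < b) : ∃ x, a < x ∧ x < b ∧ g x < g a := by
  have h1 := (hasDerivAt_iff_tendsto_slope.1 hg).eventually (gt_mem_nhds h)
  have h2 : ∀ᶠ x in 𝓝[>] a, slope g a x < 0 :=
    h1.filter_mono (nhdsWithin_mono _ fun x hx => ne_of_gt hx)
  obtain ⟨x, hx, hx2⟩ := (h2.and (Ioo_mem_nhdsGT hab)).exists
  refine ⟨x, hx2.1, hx2.2, ?_⟩
  rw [slope_def_field, div_neg_iff] at hx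
  rcases hx with hx | hx <;> linarith [hx2.1]

/-- A function with positive derivative takes a smaller value somewhere just to the left. -/
lemma exists_left_lt {g : ℝ → ℝ} {g' a b : ℝ} (hg : HasDerivAt g g' a) (h : 0 < g')
    (hab : b < a) : ∃ x, b < x ∧ x < a ∧ g x < g a := by
  have h1 := (hasDerivAt_iff_tendsto_slope.1 hg).eventually (lt_mem_nhds h)
  have h2 : ∀ᶠ x in 𝓝[<] a, 0 < slope g a x :=
    h1.filter_mono (nhdsWithin_mono _ fun x hx => ne_of_lt hx)
  obtain ⟨x, hx, hx2⟩ := (h2.and (Ioo_mem_nhdsLT hab)).exists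
  refine ⟨x, hx2.1, hx2.2, ?_⟩
  rw [slope_def_field, div_pos_iff] at hx
  rcases hx with hx | hx <;> linarith [hx2.2]

/-! ### Concentration under tilting, and bounds on the truncated sums -/

/-- Under the tilted product weights, the upper tail of `∑ u(x_j)` is exponentially small. This is
the exponential Markov inequality: `η ↦ Z_u(α - η) e^{-η(s + δ)}` has derivative `-δ Z_u(α) < 0` at
`0`. -/
lemma upper_tail [Nonempty ι] (u : ι → ℝ) (α : ℝ) {δ : ℝ} (hδ : 0 < δ) :
    ∃ ρ : ℝ, 0 ≤ ρ ∧ ρ < 1 ∧ ∀ k : ℕ,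
      ∑ x : Fin k → ι with k * (tiltMean u α + δ) < ∑ j, u (x j), exp (-(α * ∑ j, u (x j)))
        ≤ ρ ^ k * partFn u α ^ k := by
  set s := tiltMean u α with hs
  have hd : HasDerivAt (fun η => partFn u (α - η) * exp (-(η * (s + δ))))
      (-(δ * partFn u α)) 0 := by
    have h1 : HasDerivAt (fun η => partFn u (α - η)) (-(-(s * partFn u α))) 0 := by
      have h0 := hasDerivAt_partFn u (α - 0)
      have := HasDerivAt.comp_const_sub α 0 h0
      simpa [hs] using this
    have h2 : HasDerivAt (fun η : ℝ => exp (-(η * (s + δ))))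
        (exp (-(0 * (s + δ))) * (-(1 * (s + δ)))) 0 :=
      (((hasDerivAt_id (0 : ℝ)).mul_const (s + δ)).neg).exp
    refine (h1.mul h2).congr_deriv ?_
    simp only [sub_zero, zero_mul, neg_zero, exp_zero]
    ring
  obtain ⟨η, h0, -, hη⟩ := exists_right_lt hd (by have := partFn_pos u α; nlinarith)
    (zero_lt_one)
  simp only [sub_zero, zero_mul, neg_zero, exp_zero, mul_one] at hη
  have hZ := partFn_pos u α
  refine ⟨partFn u (α - η) * exp (-(η * (s + δ))) / partFn u α, ?_, ?_, fun k => ?_⟩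
  · have := partFn_pos u (α - η)
    positivity
  · rwa [div_lt_one hZ]
  · rw [← mul_pow, div_mul_cancel₀ _ hZ.ne', mul_pow, ← sum_exp_pi, ← Real.exp_nat_mul,
      Finset.sum_mul]
    refine (Finset.sum_le_sum fun x hx => ?_).trans
      (Finset.sum_le_sum_of_subset_of_nonneg (Finset.subset_univ _) fun _ _ _ => by positivity)
    rw [Finset.mem_filter] at hx
    rw [← exp_add, exp_le_exp]
    nlinarith [hx.2]

lemma partFn_neg (u : ι → ℝ) (α : ℝ) : partFn (-u) (-α) = partFn u α := by
  simp [partFn]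

lemma tiltMean_neg (u : ι → ℝ) (α : ℝ) : tiltMean (-u) (-α) = -tiltMean u α := by
  simp [tiltMean, partFn_neg, neg_div]

/-- Law of large numbers for the tilted product weights: at least half of their total mass
`Z_u(α)^k` sits where `∑ u(x_j)` is within `kδ` of `k` times the tilted mean. The lower tail is the
upper tail for `-u` at `-α`. -/
lemma window [Nonempty ι] (u : ι → ℝ) (α : ℝ) {δ : ℝ} (hδ : 0 < δ) :
    ∀ᶠ k : ℕ in atTop, partFn u α ^ k / 2 ≤
      ∑ x : Fin k → ι with k * (tiltMean u α - δ) ≤ ∑ j, u (x j) ∧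
        ∑ j, u (x j) ≤ k * (tiltMean u α + δ), exp (-(α * ∑ j, u (x j))) := by
  obtain ⟨ρ, h0, h1, h⟩ := upper_tail u α hδ
  obtain ⟨ρ', h0', h1', h'⟩ := upper_tail (-u) (-α) hδ
  have hlim := (tendsto_pow_atTop_nhds_zero_of_lt_one h0 h1).add
    (tendsto_pow_atTop_nhds_zero_of_lt_one h0' h1')
  filter_upwards [hlim.eventually (gt_mem_nhds (show (0 : ℝ) + 0 < 1 / 2 by norm_num))]
    with k hk
  have hk1 := h k
  have hk2 := h' k
  rw [partFn_neg, tiltMean_neg] at hk2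
  simp only [Pi.neg_apply, Finset.sum_neg_distrib, neg_mul_neg] at hk2
  have hZ : 0 < partFn u α ^ k := pow_pos (partFn_pos u α) k
  have key : partFn u α ^ k ≤
      ∑ x : Fin k → ι with k * (tiltMean u α - δ) ≤ ∑ j, u (x j) ∧
        ∑ j, u (x j) ≤ k * (tiltMean u α + δ), exp (-(α * ∑ j, u (x j)))
      + ∑ x : Fin k → ι with k * (tiltMean u α + δ) < ∑ j, u (x j), exp (-(α * ∑ j, u (x j)))
      + ∑ x : Fin k → ι with k * (-tiltMean u α + δ) < -∑ j, u (x j),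
          exp (-(α * ∑ j, u (x j))) := by
    rw [← sum_exp_pi]
    simp only [Finset.sum_filter]
    rw [← Finset.sum_add_distrib, ← Finset.sum_add_distrib]
    refine Finset.sum_le_sum fun x _ => ?_
    have := exp_pos (-(α * ∑ j, u (x j)))
    split_ifs <;> first | linarith | skip
    rename_i a b c
    exact absurd ⟨by linarith, by linarith⟩ a
  nlinarith

/-- Chernoff upper bound, from `(e^{-U} - e^{-T})₊ ≤ e^{-βU + (β-1)T}` for `β ≥ 1`. -/
lemma excess_le [Nonempty ι] (u : ι → ℝ) {β : ℝ} (hβ : 1 ≤ β) (σ : ℝ) (k : ℕ) :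
    ∑ x : Fin k → ι, max (exp (-∑ j, u (x j)) - exp (-(k * σ))) 0
      ≤ exp (k * (log (partFn u β) + (β - 1) * σ)) := by
  rw [mul_add, exp_add, ← pow_partFn, ← sum_exp_pi, Finset.sum_mul]
  refine Finset.sum_le_sum fun x _ => max_le ?_ (by positivity)
  rw [← exp_add]
  set U := ∑ j, u (x j)
  rcases le_total U (k * σ) with hU | hU
  · refine le_trans (sub_le_self _ (exp_pos _).le) (exp_le_exp.2 ?_)
    nlinarith
  · have : exp (-U) ≤ exp (-(k * σ)) := exp_le_exp.2 (by linarith)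
    linarith [exp_pos (-(β * U) + k * ((β - 1) * σ))]

/-- Chernoff upper bound, from `min(e^{-U}, e^{-T}) ≤ e^{-αU - (1-α)T}` for `0 ≤ α ≤ 1`. -/
lemma trunc_le [Nonempty ι] (u : ι → ℝ) {α : ℝ} (h0 : 0 ≤ α) (h1 : α ≤ 1) (σ : ℝ) (k : ℕ) :
    ∑ x : Fin k → ι, min (exp (-∑ j, u (x j))) (exp (-(k * σ)))
      ≤ exp (k * (log (partFn u α) - (1 - α) * σ)) := by
  rw [mul_sub, sub_eq_add_neg, exp_add, ← pow_partFn, ← sum_exp_pi, Finset.sum_mul]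
  refine Finset.sum_le_sum fun x _ => ?_
  rw [← exp_add]
  set U := ∑ j, u (x j)
  rcases le_total U (k * σ) with hU | hU
  · exact (min_le_right _ _).trans (exp_le_exp.2 (by nlinarith))
  · exact (min_le_left _ _).trans (exp_le_exp.2 (by nlinarith))

lemma eventually_le_exp {ε : ℝ} (hε : 0 < ε) (C : ℝ) : ∀ᶠ k : ℕ in atTop, C ≤ exp (k * ε) :=
  (tendsto_exp_atTop.comp (tendsto_natCast_atTop_atTop.atTop_mul_const hε)).eventually_ge_atTop C

/-- Lower bound matching `excess_le`: each `x` in the window of the tilt `α` has weight at least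
twice the threshold `e^{-kσ}`, hence contributes at least half its weight. -/
lemma le_excess [Nonempty ι] (u : ι → ℝ) {α : ℝ} (hα : 1 ≤ α) {δ : ℝ} (hδ : 0 < δ) :
    ∀ᶠ k : ℕ in atTop, ∀ σ, tiltMean u α + 2 * δ ≤ σ →
      exp (k * (log (partFn u α) + (α - 1) * (tiltMean u α - δ))) / 4
      ≤ ∑ x : Fin k → ι, max (exp (-∑ j, u (x j)) - exp (-(k * σ))) 0 := by
  filter_upwards [window u α hδ, eventually_le_exp hδ 2] with k hk hk2 σ hσ
  set s := tiltMean u α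
  have hk0 : (0 : ℝ) ≤ k := k.cast_nonneg
  rw [mul_add, exp_add, ← pow_partFn]
  calc partFn u α ^ k * exp (k * ((α - 1) * (s - δ))) / 4
      = partFn u α ^ k / 2 * (exp (k * ((α - 1) * (s - δ))) / 2) := by ring
    _ ≤ _ := mul_le_mul_of_nonneg_right hk (by positivity)
    _ ≤ _ := by
      rw [Finset.sum_mul]
      refine (Finset.sum_le_sum fun x hx => ?_).trans
        (Finset.sum_le_sum_of_subset_of_nonneg (Finset.subset_univ _) fun _ _ _ => by positivity)
      refine le_max_of_le_left ?_
      rw [Finset.mem_filter] at hx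
      obtain ⟨-, hx1, hx2⟩ := hx
      set U := ∑ j, u (x j)
      have e1 : exp (-(k * σ)) * 2 ≤ exp (-U) := by
        refine (mul_le_mul_of_nonneg_left hk2 (exp_pos _).le).trans ?_
        rw [← exp_add, exp_le_exp]
        nlinarith
      have e2 : exp (-(α * U)) * exp (k * ((α - 1) * (s - δ))) ≤ exp (-U) := by
        rw [← exp_add, exp_le_exp]
        nlinarith
      linarith

/-- Lower bound matching `trunc_le`. The two hypotheses on the rate `c` correspond to the two
entries of the minimum, evaluated in the window of the tilt `β`. -/
lemma le_trunc [Nonempty ι] (u : ι → ℝ) {β : ℝ} (h0 : 0 ≤ β) (h1 : β ≤ 1) {δ : ℝ}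
    (hδ : 0 < δ) :
    ∀ᶠ k : ℕ in atTop, ∀ σ c, c ≤ log (partFn u β) - (1 - β) * (tiltMean u β + δ) →
      c ≤ log (partFn u β) - σ + β * (tiltMean u β - δ) →
      exp (k * c) / 2 ≤ ∑ x : Fin k → ι, min (exp (-∑ j, u (x j))) (exp (-(k * σ))) := by
  filter_upwards [window u β hδ] with k hk σ c hc1 hc2
  set s := tiltMean u β
  have hk0 : (0 : ℝ) ≤ k := k.cast_nonneg
  calc exp (k * c) / 2
      = partFn u β ^ k / 2 * exp (k * (c - log (partFn u β))) := by
        rw [div_mul_eq_mul_div, pow_partFn, ← exp_add]; ring_nf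
    _ ≤ _ := mul_le_mul_of_nonneg_right hk (by positivity)
    _ ≤ _ := by
      rw [Finset.sum_mul]
      refine (Finset.sum_le_sum fun x hx => ?_).trans
        (Finset.sum_le_sum_of_subset_of_nonneg (Finset.subset_univ _) fun _ _ _ => by positivity)
      rw [Finset.mem_filter] at hx
      obtain ⟨-, hx1, hx2⟩ := hx
      set U := ∑ j, u (x j)
      rw [← exp_add]
      refine le_min (exp_le_exp.2 ?_) (exp_le_exp.2 ?_)
      · have := mul_le_mul_of_nonneg_left hc1 hk0
        nlinarith [mul_le_mul_of_nonneg_left hx2 (sub_nonneg.2 h1)]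
      · have := mul_le_mul_of_nonneg_left hc2 hk0
        nlinarith [mul_le_mul_of_nonneg_left hx1 h0]
end

/-! ### Strict gaps between the rates -/

section
variable {ι κ : Type*} [Fintype ι] [Fintype κ]

/-- Between `min u` and the entropy of `q`, some Chernoff rate for `q` is strictly
smaller than a rate attained by `p` at a tilt whose mean is strictly below `σ`. -/
lemma gap_upper [Nonempty ι] [Nonempty κ] (u : ι → ℝ) (v : κ → ℝ)
    (hu : partFn u 1 = 1) (hv : partFn v 1 = 1)
    (hgt : ∀ α, 1 < α → partFn v α < partFn u α) {i₀ : ι} {σ : ℝ} (hi : u i₀ < σ)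
    (hσ : σ < tiltMean v 1) :
    ∃ α β, 1 ≤ α ∧ 1 ≤ β ∧ tiltMean u α < σ ∧
      log (partFn v β) + (β - 1) * σ < log (partFn u α) + (α - 1) * tiltMean u α := by
  have hder : ∀ τ α, HasDerivAt (fun a => log (partFn u a) + (a - 1) * τ)
      (-tiltMean u α + τ) α := fun τ α => by
    simpa using (hasDerivAt_log_partFn u α).fun_add
      (((hasDerivAt_id α).sub_const 1).mul_const τ)
  obtain ⟨σ', h1, h2⟩ := exists_between hi
  set A : ℝ := (|σ| + 1) / (σ' - u i₀) + 1 with hA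
  have hA1 : 1 < A := by
    have : 0 < (|σ| + 1) / (σ' - u i₀) := div_pos (by positivity) (by linarith)
    linarith
  -- The minimizer over `[1, ∞)` exists and lies in `[1, A)`, because `log Z(α) ≥ -α u(i₀)`.
  have hmin : ∀ τ, σ' ≤ τ → τ ≤ σ → ∃ α, 1 ≤ α ∧ α < A ∧
      (∀ a, 1 ≤ a → a ≤ A → log (partFn u α) + (α - 1) * τ ≤ log (partFn u a) + (a - 1) * τ) ∧
      tiltMean u α ≤ τ ∧ (α - 1) * tiltMean u α = (α - 1) * τ := by
    intro τ hτ1 hτ2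
    obtain ⟨α, ⟨ha1, ha2⟩, hα⟩ := isCompact_Icc.exists_isMinOn (Set.nonempty_Icc.2 hA1.le)
      (fun a _ => (hder τ a).continuousAt.continuousWithinAt)
    have hα' : ∀ a, 1 ≤ a → a ≤ A →
        log (partFn u α) + (α - 1) * τ ≤ log (partFn u a) + (a - 1) * τ :=
      fun a h h' => hα ⟨h, h'⟩
    have hlt : α < A := by
      refine lt_of_le_of_ne ha2 fun hc => ?_
      have b1 := hα' 1 le_rfl hA1.le
      rw [hu, log_one, hc] at b1
      have b2 : -(A * u i₀) ≤ log (partFn u A) := by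
        rw [le_log_iff_exp_le (partFn_pos u A)]
        exact Finset.single_le_sum (f := fun i => exp (-(A * u i)))
          (fun _ _ => (exp_pos _).le) (Finset.mem_univ i₀)
      have b3 : |σ| + 1 + (σ' - u i₀) = A * (σ' - u i₀) := by
        rw [hA, add_mul, div_mul_cancel₀ _ (by linarith : 0 < σ' - u i₀).ne']
        ring
      nlinarith [le_abs_self σ]
    have hle : tiltMean u α ≤ τ := by
      by_contra! hc
      obtain ⟨a, c1, c2, c3⟩ := exists_right_lt (hder τ α) (by linarith) hlt
      linarith [hα' a (by linarith) c2.le]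
    refine ⟨α, ha1, hlt, hα', hle, ?_⟩
    -- An interior minimizer is a critical point, so its tilted mean equals `τ`.
    rcases ha1.eq_or_lt with rfl | h
    · simp
    · congr 1
      refine le_antisymm hle ?_
      by_contra! hc
      obtain ⟨a, c1, c2, c3⟩ := exists_left_lt (hder τ α) (by linarith) h
      linarith [hα' a c1.le (by linarith)]
  obtain ⟨α₀, p1, p2, p3, -, -⟩ := hmin σ h2.le le_rfl
  obtain ⟨β, hβ, hgap⟩ : ∃ β, 1 ≤ β ∧
      log (partFn v β) + (β - 1) * σ < log (partFn u α₀) + (α₀ - 1) * σ := by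
    rcases p1.eq_or_lt with rfl | h
    · have hd : HasDerivAt (fun a => log (partFn v a) + (a - 1) * σ) (-tiltMean v 1 + σ) 1 := by
        simpa using (hasDerivAt_log_partFn v 1).fun_add
          (((hasDerivAt_id (1 : ℝ)).sub_const 1).mul_const σ)
      obtain ⟨β, c1, -, c3⟩ := exists_right_lt hd (by linarith) one_lt_two
      refine ⟨β, c1.le, ?_⟩
      rw [hu]
      rw [hv] at c3
      exact c3
    · exact ⟨α₀, h.le, by linarith [log_lt_log (partFn_pos v α₀) (hgt α₀ h)]⟩
  set g := log (partFn u α₀) + (α₀ - 1) * σ - (log (partFn v β) + (β - 1) * σ) with hg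
  -- Lowering `σ` to `σ₁` costs at most `(α - 1)(σ - σ₁) < g`, because minimizers stay below `A`.
  obtain ⟨σ₁, q1, q2⟩ := exists_between
    (max_lt h2 (sub_lt_self σ (div_pos (by linarith : 0 < g) (by linarith : 0 < A))))
  obtain ⟨α, r1, r2, -, r4, r5⟩ := hmin σ₁ ((le_max_left _ _).trans q1.le) q2.le
  refine ⟨α, β, r1, hβ, by linarith, ?_⟩
  have q3 : σ - σ₁ < g / A := by linarith [(le_max_right σ' (σ - g / A)).trans_lt q1]
  rw [lt_div_iff₀ (by linarith)] at q3
  rw [r5]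
  have := p3 α r1 r2.le
  nlinarith

/-- Above the entropy of `p`, some Chernoff rate for `p` is strictly smaller than the rate that
`le_trunc` yields for `q`. The tilt `β` minimizes `log Z_v(β) - (1-β)σ` over `[0, 1]`; there both
expressions on the right are at least this minimum. -/
lemma gap_lower [Nonempty ι] [Nonempty κ] (u : ι → ℝ) (v : κ → ℝ)
    (hu : partFn u 1 = 1) (hv : partFn v 1 = 1)
    (hlt : ∀ α, 0 ≤ α → α < 1 → partFn u α < partFn v α) {σ : ℝ}
    (hσ : tiltMean u 1 < σ) :
    ∃ α β, 0 ≤ α ∧ α ≤ 1 ∧ 0 ≤ β ∧ β ≤ 1 ∧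
      log (partFn u α) - (1 - α) * σ < log (partFn v β) - (1 - β) * tiltMean v β ∧
      log (partFn u α) - (1 - α) * σ < log (partFn v β) - σ + β * tiltMean v β := by
  have hder : ∀ α, HasDerivAt (fun a => log (partFn v a) + a * σ)
      (-tiltMean v α + σ) α := fun α => by
    simpa using (hasDerivAt_log_partFn v α).fun_add ((hasDerivAt_id α).mul_const σ)
  obtain ⟨β, ⟨hb0, hb1⟩, hmin⟩ := isCompact_Icc.exists_isMinOn
    (Set.nonempty_Icc.2 (zero_le_one (α := ℝ)))
    (fun a _ => (hder a).continuousAt.continuousWithinAt)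
  have hmin' : ∀ a, 0 ≤ a → a ≤ 1 → log (partFn v β) + β * σ ≤ log (partFn v a) + a * σ :=
    fun a h h' => hmin ⟨h, h'⟩
  have hle : β < 1 → tiltMean v β ≤ σ := by
    intro h
    by_contra! hc
    obtain ⟨a, c1, c2, c3⟩ := exists_right_lt (hder β) (by linarith) h
    linarith [hmin' a (by linarith) c2.le]
  have hge : 0 < β → σ ≤ tiltMean v β := by
    intro h
    by_contra! hc
    obtain ⟨a, c1, c2, c3⟩ := exists_left_lt (hder β) (by linarith) h
    linarith [hmin' a c1.le (by linarith)]
  obtain ⟨α, ha0, ha1, hα⟩ : ∃ α, 0 ≤ α ∧ α ≤ 1 ∧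
      log (partFn u α) - (1 - α) * σ < log (partFn v β) - (1 - β) * σ := by
    rcases hb1.eq_or_lt with rfl | h
    · have hd : HasDerivAt (fun a => log (partFn u a) + a * σ) (-tiltMean u 1 + σ) 1 := by
        simpa using (hasDerivAt_log_partFn u 1).fun_add ((hasDerivAt_id (1 : ℝ)).mul_const σ)
      obtain ⟨α, c1, c2, c3⟩ := exists_left_lt hd (by linarith) zero_lt_one
      refine ⟨α, c1.le, c2.le, ?_⟩
      rw [hu] at c3
      rw [hv]
      linarith
    · exact ⟨β, hb0, h.le, by linarith [log_lt_log (partFn_pos u β) (hlt β hb0 h)]⟩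
  refine ⟨α, β, ha0, ha1, hb0, hb1, ?_, ?_⟩
  · refine hα.trans_le ?_
    rcases hb1.eq_or_lt with rfl | h
    · simp
    · nlinarith [hle h]
  · refine hα.trans_le ?_
    rcases hb0.eq_or_lt with rfl | h
    · simp
    · nlinarith [hge h]

/-! ### Comparison of truncated sums, uniformly in the threshold -/

/-- The truncated sum of `p^{⊗k}` is at most that of `q^{⊗k}` at threshold `e^{-kσ}`, where
`p = e^{-u}` and `q = e^{-v}`. -/
def TruncLE (u : ι → ℝ) (v : κ → ℝ) (k : ℕ) (σ : ℝ) : Prop :=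
  ∑ x : Fin k → ι, min (exp (-∑ j, u (x j))) (exp (-(k * σ))) ≤
    ∑ y : Fin k → κ, min (exp (-∑ j, v (y j))) (exp (-(k * σ)))

lemma excess_eq {u : ι → ℝ} (hu : partFn u 1 = 1) (k : ℕ) (t : ℝ) :
    ∑ x : Fin k → ι, max (exp (-∑ j, u (x j)) - t) 0
      = 1 - ∑ x : Fin k → ι, min (exp (-∑ j, u (x j))) t := by
  have h := sum_exp_pi u 1 k
  simp only [one_mul, hu, one_pow] at h
  rw [← h, ← Finset.sum_sub_distrib]
  refine Finset.sum_congr rfl fun x _ => ?_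
  rcases le_total (exp (-∑ j, u (x j))) t with h | h
  · rw [max_eq_right (by linarith), min_eq_left h, sub_self]
  · rw [max_eq_left (by linarith), min_eq_right h]

lemma truncLE_near_upper [Nonempty ι] [Nonempty κ] {u : ι → ℝ} {v : κ → ℝ}
    (hu : partFn u 1 = 1) (hv : partFn v 1 = 1)
    (hgt : ∀ α, 1 < α → partFn v α < partFn u α) {i₀ : ι} {σ₀ : ℝ} (hi : u i₀ < σ₀)
    (hσ : σ₀ < tiltMean v 1) :
    ∃ ε > 0, ∀ᶠ k : ℕ in atTop, ∀ σ, |σ - σ₀| < ε → TruncLE u v k σ := by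
  obtain ⟨α, β, ha, hb, hs, hgap⟩ := gap_upper u v hu hv hgt hi hσ
  set s := tiltMean u α
  set g := log (partFn u α) + (α - 1) * s - (log (partFn v β) + (β - 1) * σ₀) with hg
  set ε := min ((σ₀ - s) / 3) (g / (α + β)) with hε
  have hε0 : 0 < ε := lt_min (by linarith) (div_pos (by linarith) (by linarith))
  have e1 : ε * 3 ≤ σ₀ - s := (le_div_iff₀ (by norm_num)).1 (min_le_left _ _)
  have e2 : ε * (α + β) ≤ g := (le_div_iff₀ (by linarith)).1 (min_le_right _ _)
  refine ⟨ε, hε0, ?_⟩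
  filter_upwards [le_excess u ha hε0, eventually_le_exp hε0 4] with k hk hk4 σ hσ
  obtain ⟨f1, f2⟩ := abs_lt.1 hσ
  have l1 := hk σ (by linarith)
  have l2 := excess_le v hb σ k
  have hk0 : (0 : ℝ) ≤ k := k.cast_nonneg
  have l3 : exp (k * (log (partFn v β) + (β - 1) * σ)) * 4
      ≤ exp (k * (log (partFn u α) + (α - 1) * (s - ε))) := by
    refine (mul_le_mul_of_nonneg_left hk4 (exp_pos _).le).trans ?_
    rw [← exp_add, exp_le_exp, ← mul_add]
    exact mul_le_mul_of_nonneg_left (by nlinarith) hk0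
  rw [excess_eq hu] at l1
  rw [excess_eq hv] at l2
  unfold TruncLE
  linarith

lemma truncLE_near_lower [Nonempty ι] [Nonempty κ] {u : ι → ℝ} {v : κ → ℝ}
    (hu : partFn u 1 = 1) (hv : partFn v 1 = 1)
    (hlt : ∀ α, 0 ≤ α → α < 1 → partFn u α < partFn v α) {σ₀ : ℝ}
    (hσ : tiltMean u 1 < σ₀) :
    ∃ ε > 0, ∀ᶠ k : ℕ in atTop, ∀ σ, |σ - σ₀| < ε → TruncLE u v k σ := by
  obtain ⟨α, β, ha0, ha1, hb0, hb1, hg1, hg2⟩ := gap_lower u v hu hv hlt hσ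
  set s := tiltMean v β
  obtain ⟨c, hc, hc'⟩ := exists_between (lt_min hg1 hg2)
  obtain ⟨hc1, hc2⟩ := lt_min_iff.1 hc'
  set ε := min ((c - (log (partFn u α) - (1 - α) * σ₀)) / 2)
    (min (log (partFn v β) - (1 - β) * s - c) ((log (partFn v β) - σ₀ + β * s - c) / 2)) with hε
  have hε0 : 0 < ε :=
    lt_min (by linarith) (lt_min (by linarith) (by linarith))
  have e1 : ε ≤ (c - (log (partFn u α) - (1 - α) * σ₀)) / 2 := min_le_left _ _
  have e2 : ε ≤ log (partFn v β) - (1 - β) * s - c :=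
    (min_le_right _ _).trans (min_le_left _ _)
  have e3 : ε ≤ (log (partFn v β) - σ₀ + β * s - c) / 2 :=
    (min_le_right _ _).trans (min_le_right _ _)
  refine ⟨ε, hε0, ?_⟩
  filter_upwards [le_trunc v hb0 hb1 hε0, eventually_le_exp hε0 2] with k hk hk2 σ hσ
  obtain ⟨f1, f2⟩ := abs_lt.1 hσ
  have hk0 : (0 : ℝ) ≤ k := k.cast_nonneg
  have l1 := hk σ c (by nlinarith) (by nlinarith)
  have l2 := trunc_le u ha0 ha1 σ k
  have l3 : exp (k * (log (partFn u α) - (1 - α) * σ)) * 2 ≤ exp (k * c) := by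
    refine (mul_le_mul_of_nonneg_left hk2 (exp_pos _).le).trans ?_
    rw [← exp_add, exp_le_exp, ← mul_add]
    exact mul_le_mul_of_nonneg_left (by nlinarith) hk0
  unfold TruncLE
  linarith

lemma truncLE_of_small {u : ι → ℝ} {v : κ → ℝ}
    (hu : partFn u 1 = 1) (hv : partFn v 1 = 1) {σ : ℝ} (h : ∀ j, σ ≤ v j) (k : ℕ) :
    TruncLE u v k σ := by
  have hu' := sum_exp_pi u 1 k
  have hv' := sum_exp_pi v 1 k
  simp only [one_mul, hu, hv, one_pow] at hu' hv'
  calc _ ≤ ∑ x : Fin k → ι, exp (-∑ j, u (x j)) := Finset.sum_le_sum fun x _ => min_le_left _ _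
    _ = ∑ y : Fin k → κ, exp (-∑ j, v (y j)) := by rw [hu', hv']
    _ = _ := Finset.sum_congr rfl fun y _ => (min_eq_left (exp_le_exp.2 (neg_le_neg ?_))).symm
  simpa using Finset.card_nsmul_le_sum Finset.univ (fun j => v (y j)) σ fun j _ => h _

lemma truncLE_of_large {u : ι → ℝ} {v : κ → ℝ}
    (hcard : Fintype.card ι ≤ Fintype.card κ) {σ : ℝ} (h : ∀ j, v j ≤ σ) (k : ℕ) :
    TruncLE u v k σ := by
  calc _ ≤ ∑ x : Fin k → ι, exp (-(k * σ)) := Finset.sum_le_sum fun x _ => min_le_right _ _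
    _ ≤ ∑ y : Fin k → κ, exp (-(k * σ)) := by
      simp only [Finset.sum_const, Finset.card_univ, Fintype.card_fun, Fintype.card_fin,
        nsmul_eq_mul]
      gcongr
    _ = _ := Finset.sum_congr rfl fun y _ => (min_eq_right (exp_le_exp.2 (neg_le_neg ?_))).symm
  simpa using Finset.sum_le_card_nsmul Finset.univ (fun j => v (y j)) σ fun j _ => h _

/-- Asymptotic comparison for strictly positive vectors `e^{-u}` and `e^{-v}`, at all thresholds
simultaneously. -/
theorem eventually_truncLE [Nonempty ι] [Nonempty κ] {u : ι → ℝ} {v : κ → ℝ}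
    (hu : partFn u 1 = 1) (hv : partFn v 1 = 1)
    (hlt : ∀ α, 0 ≤ α → α < 1 → partFn u α < partFn v α)
    (hgt : ∀ α, 1 < α → partFn v α < partFn u α)
    (hH : tiltMean u 1 < tiltMean v 1) (hmin : ∃ i, ∀ j, u i < v j) :
    ∀ᶠ k : ℕ in atTop, ∀ σ, TruncLE u v k σ := by
  obtain ⟨i₀, hi₀⟩ := hmin
  obtain ⟨j₀, hj₀⟩ := Finite.exists_min v
  obtain ⟨j₁, hj₁⟩ := Finite.exists_max v
  have hcard : Fintype.card ι ≤ Fintype.card κ := by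
    have := hlt 0 le_rfl zero_lt_one
    simp only [partFn, zero_mul, neg_zero, exp_zero, Finset.sum_const, Finset.card_univ,
      nsmul_eq_mul, mul_one, Nat.cast_lt] at this
    exact this.le
  have hK : ∀ᶠ k : ℕ in atTop, ∀ σ ∈ Set.Icc (v j₀) (v j₁), TruncLE u v k σ := by
    refine isCompact_Icc.induction_on
      (p := fun S : Set ℝ => ∀ᶠ k : ℕ in atTop, ∀ σ ∈ S, TruncLE u v k σ) (by simp)
      (fun S T hST hT => hT.mono fun k hk σ hσ => hk σ (hST hσ))
      (fun S T hS hT => by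
        filter_upwards [hS, hT] with k h1 h2 σ hσ
        exact hσ.elim (h1 σ) (h2 σ)) ?_
    intro σ₀ hσ₀
    obtain ⟨ε, hε, h⟩ :
        ∃ ε > 0, ∀ᶠ k : ℕ in atTop, ∀ σ, |σ - σ₀| < ε → TruncLE u v k σ := by
      rcases lt_or_ge σ₀ (tiltMean v 1) with h | h
      · exact truncLE_near_upper hu hv hgt ((hi₀ j₀).trans_le hσ₀.1) h
      · exact truncLE_near_lower hu hv hlt (hH.trans_le h)
    exact ⟨Metric.ball σ₀ ε, mem_nhdsWithin_of_mem_nhds (Metric.ball_mem_nhds _ hε),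
      h.mono fun k hk σ hσ => hk σ hσ⟩
  filter_upwards [hK] with k hk σ
  rcases le_total σ (v j₀) with h | h
  · exact truncLE_of_small hu hv (fun j => h.trans (hj₀ j)) k
  rcases le_total σ (v j₁) with h' | h'
  · exact hk σ ⟨h, h'⟩
  · exact truncLE_of_large hcard (fun j => (hj₁ j).trans h') k
end

/-! ### From truncated sums to majorization -/

/-- Truncated sums detect majorization. For given `s`, the criterion is applied at the smallest of
the `s.card` largest entries of `x`. -/
lemma majorizes_of_sum_min_le {ι : Type*} [Fintype ι] {x y : ι → ℝ} (hx : ∀ i, 0 ≤ x i)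
    (hsum : ∑ i, x i = ∑ i, y i)
    (h : ∀ t, 0 < t → ∑ i, min (x i) t ≤ ∑ i, min (y i) t) (hy : ∀ i, 0 ≤ y i) :
    Majorizes x y := by
  classical
  refine ⟨hsum, fun s => ?_⟩
  obtain ⟨t, ht, hmax⟩ := Finset.exists_max_image (Finset.univ.powersetCard s.card)
    (fun t => ∑ i ∈ t, x i) (Finset.powersetCard_nonempty.2 (Finset.card_le_univ s))
  have htc : t.card = s.card := (Finset.mem_powersetCard.1 ht).2
  refine ⟨t, htc, ?_⟩
  rcases t.eq_empty_or_nonempty with rfl | hne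
  · have : s = ∅ := Finset.card_eq_zero.1 htc.symm
    simp [this]
  obtain ⟨a, hat, ha⟩ := Finset.exists_min_image t x hne
  -- Exchanging `a` for an element outside `t` cannot increase the sum.
  have hout : ∀ b ∉ t, x b ≤ x a := by
    intro b hb
    have hb' : b ∉ t.erase a := fun h => hb (Finset.mem_of_mem_erase h)
    have := hmax (insert b (t.erase a)) (by
      rw [Finset.mem_powersetCard]
      refine ⟨Finset.subset_univ _, ?_⟩
      rw [Finset.card_insert_of_notMem hb', Finset.card_erase_add_one hat, htc])
    rw [Finset.sum_insert hb', ← Finset.add_sum_erase t x hat] at this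
    linarith
  have hτ : ∑ i, min (x i) (x a) ≤ ∑ i, min (y i) (x a) := by
    rcases (hx a).eq_or_lt with h0 | h0
    · rw [← h0]
      simp [hx, hy]
    · exact h _ h0
  have e1 : ∑ i, min (x i) (x a) = ∑ i, x i - ∑ i ∈ t, x i + t.card * x a := by
    rw [← Finset.sum_add_sum_compl t x, ← Finset.sum_add_sum_compl t,
      Finset.sum_congr rfl fun i hi => min_eq_right (ha i hi),
      Finset.sum_congr rfl fun i hi => min_eq_left (hout i (Finset.mem_compl.1 hi))]
    simp
    ring
  have e2 : ∑ i, min (y i) (x a) ≤ ∑ i, y i - ∑ i ∈ s, y i + s.card * x a := by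
    rw [← Finset.sum_add_sum_compl s y, ← Finset.sum_add_sum_compl s]
    have i1 : ∑ i ∈ s, min (y i) (x a) ≤ s.card * x a := by
      simpa using Finset.sum_le_card_nsmul s _ _ fun i _ => min_le_right (y i) (x a)
    have i2 : ∑ i ∈ sᶜ, min (y i) (x a) ≤ ∑ i ∈ sᶜ, y i :=
      Finset.sum_le_sum fun i _ => min_le_left _ _
    linarith
  rw [htc] at e1
  linarith

/-! ### Restriction to the support -/

section
variable {ι : Type*} [Fintype ι]

/-- The support of `p`, as a type. -/
abbrev Supp (p : ι → ℝ) : Type _ := {i // p i ≠ 0}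

/-- The surprisal `-log p`, defined on the support of `p` only. -/
noncomputable def surprisal (p : ι → ℝ) (i : Supp p) : ℝ := -log (p i)

lemma sum_supp (p : ι → ℝ) (F : ι → ℝ) (hF : ∀ i, p i = 0 → F i = 0) :
    ∑ i : Supp p, F i = ∑ i, F i :=
  Fintype.sum_of_injective Subtype.val Subtype.val_injective _ _
    (fun i hi => hF i (by simpa using hi)) fun _ => rfl

lemma partFn_surprisal {p : ι → ℝ} (hp : ∀ i, 0 ≤ p i) {α : ℝ} (hα : α ≠ 0) :
    partFn (surprisal p) α = ∑ i, p i ^ α := by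
  rw [← sum_supp p _ fun i hi => by rw [hi, zero_rpow hα], partFn]
  refine Finset.sum_congr rfl fun i _ => ?_
  rw [rpow_def_of_pos (lt_of_le_of_ne (hp i) i.2.symm), surprisal]
  ring_nf

lemma tiltMean_surprisal {p : ι → ℝ} (hp : IsProbVec p) :
    tiltMean (surprisal p) 1 = shannonH p := by
  rw [tiltMean, partFn_surprisal hp.1 one_ne_zero]
  simp only [rpow_one, hp.2, div_one, one_mul]
  rw [shannonH, ← sum_supp p _ fun i hi => by rw [hi, zero_mul], ← Finset.sum_neg_distrib]
  refine Finset.sum_congr rfl fun i _ => ?_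
  rw [surprisal, neg_neg, exp_log (lt_of_le_of_ne (hp.1 i) i.2.symm)]
  ring

lemma sum_min_tpow {p : ι → ℝ} (hp : ∀ i, 0 ≤ p i) (k : ℕ) {t : ℝ} (ht : 0 < t) :
    ∑ x, min (tpow p k x) t
      = ∑ x : Fin k → Supp p, min (exp (-∑ j, surprisal p (x j))) t := by
  refine (Fintype.sum_of_injective (fun (x : Fin k → Supp p) j => (x j : ι))
    (fun x y h => funext fun j => Subtype.ext (congrFun h j)) _ _ (fun x hx => ?_)
    fun x => ?_).symm
  -- A tuple that leaves the support has weight zero, so it does not contribute.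
  · have : ∃ j, p (x j) = 0 := by
      by_contra! hc
      exact hx ⟨fun j => ⟨x j, hc j⟩, rfl⟩
    obtain ⟨j, hj⟩ := this
    rw [tpow, Finset.prod_eq_zero (Finset.mem_univ j) hj, min_eq_left ht.le]
  · rw [tpow, ← Finset.sum_neg_distrib, Real.exp_sum]
    congr 1
    refine Finset.prod_congr rfl fun j _ => ?_
    rw [surprisal, neg_neg, exp_log (lt_of_le_of_ne (hp _) (x j).2.symm)]

lemma IsProbVec.nonempty_supp {p : ι → ℝ} (hp : IsProbVec p) : Nonempty (Supp p) := by
  by_contra hc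
  have h0 : ∀ i, p i = 0 := fun i => by
    by_contra hi
    exact hc ⟨⟨i, hi⟩⟩
  simpa [h0] using hp.2

lemma sum_tpow {p : ι → ℝ} (hp : IsProbVec p) (k : ℕ) : ∑ x, tpow p k x = 1 := by
  simp only [tpow]
  rw [← Fintype.sum_pow, hp.2, one_pow]
end

/-- Strict Rényi entropy inequalities for all `α ≥ 0` (including
the limiting cases `α = 0, 1, ∞`) imply that `p^{⊗k}` majorizes `q^{⊗k}` for
all sufficiently large `k`. -/
theorem multicopy_majorization_of_strict_renyi {D : ℕ} [NeZero D]
    (p q : Fin D → ℝ) (hp : IsProbVec p) (hq : IsProbVec q)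
    (h : ∀ α : ℝ, 0 < α → α ≠ 1 → renyiH α p < renyiH α q)
    (h0 : renyiH0 p < renyiH0 q)
    (h1 : shannonH p < shannonH q)
    (hinf : renyiHinf p < renyiHinf q) :
    ∃ k₀ : ℕ, ∀ k ≥ k₀, Majorizes (tpow p k) (tpow q k) := by
  classical
  have := hp.nonempty_supp
  have := hq.nonempty_supp
  have hu : partFn (surprisal p) 1 = 1 := by
    rw [partFn_surprisal hp.1 one_ne_zero]; simpa using hp.2
  have hv : partFn (surprisal q) 1 = 1 := by
    rw [partFn_surprisal hq.1 one_ne_zero]; simpa using hq.2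
  have hrenyi : ∀ α : ℝ, 0 < α → α ≠ 1 →
      1 / (1 - α) * log (partFn (surprisal p) α) < 1 / (1 - α) * log (partFn (surprisal q) α) := by
    intro α ha ha1
    rw [partFn_surprisal hp.1 ha.ne', partFn_surprisal hq.1 ha.ne']
    exact h α ha ha1
  have hlt : ∀ α, 0 ≤ α → α < 1 → partFn (surprisal p) α < partFn (surprisal q) α := by
    intro α ha ha1
    rcases ha.eq_or_lt with rfl | ha
    · have e : ∀ r : Fin D → ℝ, ((Finset.univ.filter fun i => r i ≠ 0).card : ℝ)
          = partFn (surprisal r) 0 := fun r => by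
        simp [partFn, Fintype.card_subtype]
      simp only [renyiH0, e] at h0
      exact (log_lt_log_iff (partFn_pos _ _) (partFn_pos _ _)).1 h0
    · have := lt_of_mul_lt_mul_left (hrenyi α ha ha1.ne)
        (one_div_nonneg.2 (sub_nonneg.2 ha1.le))
      exact (log_lt_log_iff (partFn_pos _ _) (partFn_pos _ _)).1 this
  have hgt : ∀ α, 1 < α → partFn (surprisal q) α < partFn (surprisal p) α := by
    intro α ha1
    have hneg : 1 / (1 - α) < 0 := one_div_neg.2 (by linarith)
    have := (mul_lt_mul_left_of_neg hneg).1 (hrenyi α (by linarith) ha1.ne')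
    exact (log_lt_log_iff (partFn_pos _ _) (partFn_pos _ _)).1 this
  have hmin : ∃ i, ∀ j, surprisal p i < surprisal q j := by
    obtain ⟨i, -, hi⟩ := Finset.exists_mem_eq_sup' (Finset.univ_nonempty (α := Fin D)) p
    obtain ⟨i', hi'⟩ := hp.nonempty_supp
    have hpi : 0 < p i := by
      rw [← hi]
      exact (lt_of_le_of_ne (hp.1 i') hi'.symm).trans_le (Finset.le_sup' p (Finset.mem_univ i'))
    refine ⟨⟨i, hpi.ne'⟩, fun j => ?_⟩
    rw [renyiHinf, renyiHinf, hi] at hinf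
    refine hinf.trans_le (neg_le_neg (log_le_log (lt_of_le_of_ne (hq.1 j) j.2.symm) ?_))
    exact Finset.le_sup' q (Finset.mem_univ _)
  have hH : tiltMean (surprisal p) 1 < tiltMean (surprisal q) 1 := by
    rwa [tiltMean_surprisal hp, tiltMean_surprisal hq]
  obtain ⟨k₀, hk₀⟩ := eventually_atTop.1
    ((eventually_truncLE hu hv hlt hgt hH hmin).and (eventually_gt_atTop 0))
  refine ⟨k₀, fun k hk => ?_⟩
  obtain ⟨htr, hkpos⟩ := hk₀ k hk
  refine majorizes_of_sum_min_le (fun x => Finset.prod_nonneg fun j _ => hp.1 _)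
    (by rw [sum_tpow hp, sum_tpow hq]) (fun t ht => ?_)
    (fun x => Finset.prod_nonneg fun j _ => hq.1 _)
  rw [sum_min_tpow hp.1 k ht, sum_min_tpow hq.1 k ht]
  have hkr : (0 : ℝ) < k := Nat.cast_pos.2 hkpos
  have := htr (-log t / k)
  rwa [TruncLE, mul_div_cancel₀ _ hkr.ne', neg_neg, exp_log ht] at this
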